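/- Under the stated setup and assumptions, for every p ∈ [1,∞] the error of projecting the best rank-k part satisfies ‖(I − QQ*)A_k‖_p ≤ γ_k^{2q}·‖Σ_⊥Ω_2Ω_1†‖_p in the Schatten-p norm, where A_k = U_k·Σ_k·V_k* is the best rank-k approximation of A. -/

import Mathlib

open scoped ENNReal
open Matrix

/-- The `j`-th largest singular value (0-indexed) of a complex matrix,
obtained as the decreasingly sorted square roots of the eigenvalues of `Mᴴ * M`. -/
noncomputable def sval {m n : ℕ} (M : Matrix (Fin m) (Fin n) ℂ) (j : ℕ) : ℝ :=
  (List.insertionSort (· ≥ ·)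
    ((List.ofFn (Matrix.isHermitian_conjTranspose_mul_self M).eigenvalues).map Real.sqrt)).getD j 0

/-- The Schatten-`p` norm (`p = ∞` gives the spectral norm). -/
noncomputable def schatten {m n : ℕ} (p : ℝ≥0∞) (M : Matrix (Fin m) (Fin n) ℂ) : ℝ :=
  if p = ⊤ then sval M 0
  else (∑ j ∈ Finset.range n, sval M j ^ p.toReal) ^ (1 / p.toReal)

/-- Moore–Penrose pseudoinverse of a full-row-rank matrix. -/
noncomputable def rpinv {a b : ℕ} (M : Matrix (Fin a) (Fin b) ℂ) : Matrix (Fin b) (Fin a) ℂ :=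
  Mᴴ * (M * Mᴴ)⁻¹

/-- Rectangular diagonal matrix with entries `σ (off), σ (off+1), …` on the diagonal. -/
noncomputable def diagRect (σ : ℕ → ℝ) (off a b : ℕ) : Matrix (Fin a) (Fin b) ℂ :=
  Matrix.of fun i j => if (i : ℕ) = (j : ℕ) then (σ (off + (i : ℕ)) : ℂ) else 0

/-- The first `b` columns of a matrix with `b + c` columns. -/
def colsL {a b c : ℕ} (M : Matrix (Fin a) (Fin (b + c)) ℂ) : Matrix (Fin a) (Fin b) ℂ :=
  M.submatrix id (Fin.castAdd c)

/-- The last `c` columns of a matrix with `b + c` columns. -/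
def colsR {a b c : ℕ} (M : Matrix (Fin a) (Fin (b + c)) ℂ) : Matrix (Fin a) (Fin c) ℂ :=
  M.submatrix id (Fin.natAdd b)

open Module


/-!
Write `A = U₁ D V₁ᴴ + U₂ S V₂ᴴ` with `D` and `S` the leading and trailing singular value blocks.
The columns of `Y = (A Aᴴ)^q A Ω` lie in the range of `Q`, so `P = 1 - Q Qᴴ` annihilates `Y`:
`P U₁ (D Dᴴ)^q D Ω₁ = - P U₂ (S Sᴴ)^q S Ω₂`. Multiplying by a right inverse `G` of `Ω₁` and
cancelling `(D Dᴴ)^q` gives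
`P (U₁ D V₁ᴴ) = - (P U₂ (S Sᴴ)^q) (S Ω₂ G) ((D⁻¹ D⁻ᴴ)^q V₁ᴴ)`,
whose outer factors have spectral norm at most `σ_{k+1}^(2q)` and `σ_k^(-2q)`. They can be pulled
out of the Schatten norm because `σ_j(X M Z) ≤ ‖X‖ ‖Z‖ σ_j(M)`, by the min-max characterization of
singular values.
-/

open Module
open scoped Matrix.Norms.L2Operator

section Codimension

variable {𝕜 V V₂ : Type*} [DivisionRing 𝕜] [AddCommGroup V] [Module 𝕜 V]
  [AddCommGroup V₂] [Module 𝕜 V₂]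

theorem finrank_quotient_comap_le (f : V →ₗ[𝕜] V₂) (W : Submodule 𝕜 V₂)
    [FiniteDimensional 𝕜 (V₂ ⧸ W)] : finrank 𝕜 (V ⧸ W.comap f) ≤ finrank 𝕜 (V₂ ⧸ W) := by
  refine LinearMap.finrank_le_finrank_of_injective (f := (W.comap f).mapQ W f le_rfl) ?_
  rw [← LinearMap.ker_eq_bot, Submodule.ker_mapQ]
  simp

theorem exists_mem_mem_ne_zero_of_finrank_quotient_lt {W K : Submodule 𝕜 V}
    [FiniteDimensional 𝕜 (V ⧸ W)] [FiniteDimensional 𝕜 K]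
    (h : finrank 𝕜 (V ⧸ W) < finrank 𝕜 K) : ∃ x ∈ W, x ∈ K ∧ x ≠ 0 := by
  obtain ⟨x, hx, hx0⟩ := Submodule.exists_mem_ne_zero_of_ne_bot
    (LinearMap.ker_ne_bot_of_finrank_lt (f := W.mkQ ∘ₗ K.subtype) h)
  exact ⟨x, by simpa using hx, x.2, by simpa using hx0⟩

end Codimension

section MinMax

variable {𝕜 E F G : Type*} [RCLike 𝕜]
  [NormedAddCommGroup E] [InnerProductSpace 𝕜 E] [FiniteDimensional 𝕜 E]
  [NormedAddCommGroup F] [InnerProductSpace 𝕜 F] [FiniteDimensional 𝕜 F]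
  [NormedAddCommGroup G] [InnerProductSpace 𝕜 G] [FiniteDimensional 𝕜 G]

theorem finrank_quotient_orthogonal_span_image_le {ι : Type*} (b : ι → E) (s : Finset ι) :
    finrank 𝕜 (E ⧸ (Submodule.span 𝕜 (b '' s))ᗮ) ≤ s.card := by
  classical
  have hspan : finrank 𝕜 (Submodule.span 𝕜 (b '' s)) ≤ s.card := by
    rw [← Finset.coe_image]
    exact (finrank_span_finset_le_card _).trans Finset.card_image_le
  have := (Submodule.span 𝕜 (b '' s)).finrank_add_finrank_orthogonal
  have := (Submodule.span 𝕜 (b '' s))ᗮ.finrank_quotient_add_finrank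
  omega

theorem exists_orthonormalBasis_norm_sq_apply_eq_sum (T : E →ₗ[𝕜] F) :
    ∃ b : OrthonormalBasis (Fin (finrank 𝕜 E)) 𝕜 E, ∀ x,
      ‖T x‖ ^ 2 = ∑ i : Fin (finrank 𝕜 E), (T.singularValues i * ‖inner 𝕜 (b i) x‖) ^ 2 := by
  let b := T.isSymmetric_adjoint_comp_self.eigenvectorBasis rfl
  refine ⟨b, fun x => ?_⟩
  have hrepr (i) : b.repr ((T.adjoint ∘ₗ T) x) i
      = ((T.singularValues i ^ 2 : ℝ) : 𝕜) * b.repr x i := by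
    rw [T.isSymmetric_adjoint_comp_self.eigenvectorBasis_apply_self_apply,
      T.sq_singularValues_fin rfl]
  calc ‖T x‖ ^ 2 = RCLike.re (inner 𝕜 x ((T.adjoint ∘ₗ T) x)) := by
        rw [LinearMap.comp_apply, LinearMap.adjoint_inner_right, inner_self_eq_norm_sq]
    _ = ∑ i, RCLike.re (inner 𝕜 (b.repr x i) (b.repr ((T.adjoint ∘ₗ T) x) i)) := by
        rw [← b.repr.inner_map_map, PiLp.inner_apply, map_sum]
    _ = ∑ i : Fin (finrank 𝕜 E), (T.singularValues i * ‖inner 𝕜 (b i) x‖) ^ 2 := by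
        refine Finset.sum_congr rfl fun i _ => ?_
        rw [hrepr, ← smul_eq_mul, inner_smul_right, RCLike.re_ofReal_mul, inner_self_eq_norm_sq,
          b.repr_apply_apply, mul_pow]

theorem exists_submodule_norm_apply_le (T : E →ₗ[𝕜] F) (j : ℕ) :
    ∃ W : Submodule 𝕜 E, finrank 𝕜 (E ⧸ W) ≤ j ∧
      ∀ x ∈ W, ‖T x‖ ≤ T.singularValues j * ‖x‖ := by
  obtain ⟨b, hb⟩ := exists_orthonormalBasis_norm_sq_apply_eq_sum T
  let s : Finset (Fin (finrank 𝕜 E)) := {i | (i : ℕ) < j}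
  have hs : s.card ≤ j := by simp [s, Fin.card_filter_val_lt]
  refine ⟨(Submodule.span 𝕜 (b '' s))ᗮ,
    (finrank_quotient_orthogonal_span_image_le b s).trans hs, fun x hx => ?_⟩
  refine le_of_sq_le_sq ?_ (mul_nonneg (T.singularValues_nonneg j) (norm_nonneg x))
  rw [hb, mul_pow, ← b.sum_sq_norm_inner_right x, Finset.mul_sum]
  refine Finset.sum_le_sum fun i _ => ?_
  rw [mul_pow]
  rcases lt_or_ge (i : ℕ) j with hij | hij
  · have : inner 𝕜 (b i) x = 0 := hx _ (Submodule.subset_span ⟨i, by simpa [s] using hij, rfl⟩)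
    simp [this]
  · gcongr
    exacts [T.singularValues_nonneg i, T.singularValues_antitone hij]

theorem exists_submodule_le_norm_apply (T : E →ₗ[𝕜] F) {j : ℕ} (hj : j < finrank 𝕜 E) :
    ∃ K : Submodule 𝕜 E, j < finrank 𝕜 K ∧ ∀ x ∈ K, T.singularValues j * ‖x‖ ≤ ‖T x‖ := by
  obtain ⟨b, hb⟩ := exists_orthonormalBasis_norm_sq_apply_eq_sum T
  let s : Finset (Fin (finrank 𝕜 E)) := Finset.Ioi ⟨j, hj⟩
  refine ⟨(Submodule.span 𝕜 (b '' s))ᗮ, ?_, fun x hx => ?_⟩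
  · have hs : s.card = finrank 𝕜 E - 1 - j := Fin.card_Ioi _
    have := finrank_quotient_orthogonal_span_image_le (𝕜 := 𝕜) b s
    have := (Submodule.span 𝕜 (b '' s))ᗮ.finrank_quotient_add_finrank
    omega
  · refine le_of_sq_le_sq ?_ (norm_nonneg _)
    rw [hb, mul_pow, ← b.sum_sq_norm_inner_right x, Finset.mul_sum]
    refine Finset.sum_le_sum fun i _ => ?_
    rw [mul_pow]
    rcases lt_or_ge j (i : ℕ) with hij | hij
    · have : inner 𝕜 (b i) x = 0 :=
        hx _ (Submodule.subset_span ⟨i, by simpa [s, Fin.lt_def] using hij, rfl⟩)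
      simp [this]
    · gcongr
      exacts [T.singularValues_nonneg j, T.singularValues_antitone hij]

theorem singularValues_le_iff_exists_submodule (T : E →ₗ[𝕜] F) (j : ℕ) {t : ℝ} (ht : 0 ≤ t) :
    T.singularValues j ≤ t ↔
      ∃ W : Submodule 𝕜 E, finrank 𝕜 (E ⧸ W) ≤ j ∧ ∀ x ∈ W, ‖T x‖ ≤ t * ‖x‖ := by
  constructor
  · intro hle
    obtain ⟨W, hWj, hW⟩ := exists_submodule_norm_apply_le T j
    exact ⟨W, hWj, fun x hx => (hW x hx).trans (by gcongr)⟩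
  · rintro ⟨W, hWj, hW⟩
    rcases le_or_gt (finrank 𝕜 E) j with hj | hj
    · rwa [T.singularValues_of_finrank_le hj]
    obtain ⟨K, hjK, hK⟩ := exists_submodule_le_norm_apply T hj
    obtain ⟨x, hxW, hxK, hx⟩ := exists_mem_mem_ne_zero_of_finrank_quotient_lt (hWj.trans_lt hjK)
    exact le_of_mul_le_mul_right ((hK x hxK).trans (hW x hxW)) (norm_pos_iff.2 hx)

theorem singularValues_comp_le_norm_mul (S : F →ₗ[𝕜] G) (T : E →ₗ[𝕜] F) (j : ℕ) :
    (S ∘ₗ T).singularValues j ≤ ‖S.toContinuousLinearMap‖ * T.singularValues j := by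
  have hj := T.singularValues_nonneg j
  obtain ⟨W, hWj, hW⟩ := exists_submodule_norm_apply_le T j
  rw [singularValues_le_iff_exists_submodule _ _ (by positivity)]
  refine ⟨W, hWj, fun x hx => ?_⟩
  calc ‖S (T x)‖ ≤ ‖S.toContinuousLinearMap‖ * ‖T x‖ := S.toContinuousLinearMap.le_opNorm _
    _ ≤ ‖S.toContinuousLinearMap‖ * (T.singularValues j * ‖x‖) := by gcongr; exact hW x hx
    _ = ‖S.toContinuousLinearMap‖ * T.singularValues j * ‖x‖ := (mul_assoc _ _ _).symm

theorem singularValues_comp_le_mul_norm (S : F →ₗ[𝕜] G) (T : E →ₗ[𝕜] F) (j : ℕ) :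
    (S ∘ₗ T).singularValues j ≤ S.singularValues j * ‖T.toContinuousLinearMap‖ := by
  have hj := S.singularValues_nonneg j
  obtain ⟨W, hWj, hW⟩ := exists_submodule_norm_apply_le S j
  rw [singularValues_le_iff_exists_submodule _ _ (by positivity)]
  refine ⟨W.comap T, (finrank_quotient_comap_le T W).trans hWj, fun x hx => ?_⟩
  calc ‖S (T x)‖ ≤ S.singularValues j * ‖T x‖ := hW _ hx
    _ ≤ S.singularValues j * (‖T.toContinuousLinearMap‖ * ‖x‖) := by
        gcongr; exact T.toContinuousLinearMap.le_opNorm x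
    _ = S.singularValues j * ‖T.toContinuousLinearMap‖ * ‖x‖ := (mul_assoc _ _ _).symm

end MinMax

section SchattenNorm

theorem sqrt_eigenvalues₀_conjTranspose_mul_self {𝕜 m n : Type*} [RCLike 𝕜] [Fintype m]
    [Fintype n] [DecidableEq n] (M : Matrix m n 𝕜) (i : Fin (Fintype.card n)) :
    √((isHermitian_conjTranspose_mul_self M).eigenvalues₀ i)
      = (toEuclideanLin M).singularValues i := by
  classical
  have hcomp : toEuclideanLin (Mᴴ * M) = (toEuclideanLin M).adjoint ∘ₗ toEuclideanLin M := by
    rw [← toEuclideanLin_conjTranspose_eq_adjoint, toLpLin_mul_same]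
  rw [(toEuclideanLin M).singularValues_fin finrank_euclideanSpace]
  simp only [IsHermitian.eigenvalues₀, hcomp]

theorem sval_eq_singularValues {m n : ℕ} (M : Matrix (Fin m) (Fin n) ℂ) (j : ℕ) :
    sval M j = (toEuclideanLin M).singularValues j := by
  set T := toEuclideanLin M
  let e : Fin n ≃ Fin n :=
    (Fintype.equivOfCardEq (Fintype.card_fin _)).symm.trans (finCongr (Fintype.card_fin n))
  have hsqrt : Real.sqrt ∘ (isHermitian_conjTranspose_mul_self M).eigenvalues
      = (fun i : Fin n => T.singularValues i) ∘ e :=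
    funext fun i => sqrt_eigenvalues₀_conjTranspose_mul_self M _
  have hsort : List.insertionSort (· ≥ ·)
      ((List.ofFn (isHermitian_conjTranspose_mul_self M).eigenvalues).map Real.sqrt)
      = List.ofFn fun i : Fin n => T.singularValues i := by
    refine List.Perm.eq_of_sortedGE List.sortedGE_insertionSort
      (Antitone.sortedGE_ofFn fun i i' h => T.singularValues_antitone h)
      ((List.perm_insertionSort _ _).trans ?_)
    rw [List.map_ofFn, hsqrt]
    exact Equiv.Perm.ofFn_comp_perm e _
  rw [sval, hsort]
  rcases lt_or_ge j n with hj | hj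
  · simp [hj]
  · simp [hj, T.singularValues_of_finrank_le]

theorem sval_nonneg {m n : ℕ} (M : Matrix (Fin m) (Fin n) ℂ) (j : ℕ) : 0 ≤ sval M j := by
  rw [sval_eq_singularValues]
  exact LinearMap.singularValues_nonneg _ j

theorem sval_eq_zero_of_le {m n : ℕ} (M : Matrix (Fin m) (Fin n) ℂ) {j : ℕ} (hj : n ≤ j) :
    sval M j = 0 := by
  rw [sval_eq_singularValues]
  exact LinearMap.singularValues_of_finrank_le _ (by simpa using hj)

theorem sval_mul_mul_le {l m n r : ℕ} (X : Matrix (Fin l) (Fin m) ℂ)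
    (M : Matrix (Fin m) (Fin n) ℂ) (Z : Matrix (Fin n) (Fin r) ℂ) (j : ℕ) :
    sval (X * M * Z) j ≤ ‖X‖ * ‖Z‖ * sval M j := by
  simp only [sval_eq_singularValues, toLpLin_mul_same]
  calc ((toEuclideanLin X ∘ₗ toEuclideanLin M) ∘ₗ toEuclideanLin Z).singularValues j
      ≤ (toEuclideanLin X ∘ₗ toEuclideanLin M).singularValues j * ‖Z‖ :=
        singularValues_comp_le_mul_norm _ _ j
    _ ≤ ‖X‖ * (toEuclideanLin M).singularValues j * ‖Z‖ := by
        gcongr; exact singularValues_comp_le_norm_mul _ _ j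
    _ = ‖X‖ * ‖Z‖ * (toEuclideanLin M).singularValues j := by ring

theorem sum_range_sval_rpow_eq {m n N : ℕ} (M : Matrix (Fin m) (Fin n) ℂ) (hN : n ≤ N) {s : ℝ}
    (hs : s ≠ 0) : ∑ j ∈ Finset.range N, sval M j ^ s = ∑ j ∈ Finset.range n, sval M j ^ s := by
  refine (Finset.sum_subset (Finset.range_mono hN) fun j _ hj => ?_).symm
  rw [sval_eq_zero_of_le M (by simpa using hj), Real.zero_rpow hs]

theorem schatten_le_mul_of_forall_sval_le {l m n r : ℕ} {p : ℝ≥0∞} (hp : 0 < p)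
    {B : Matrix (Fin l) (Fin r) ℂ} {M : Matrix (Fin m) (Fin n) ℂ} {c : ℝ} (hc : 0 ≤ c)
    (h : ∀ j, sval B j ≤ c * sval M j) : schatten p B ≤ c * schatten p M := by
  unfold schatten
  split_ifs with hp_top
  · exact h 0
  set s := p.toReal
  have hs : 0 < s := ENNReal.toReal_pos hp.ne' hp_top
  have hB (j : ℕ) : 0 ≤ sval B j ^ s := Real.rpow_nonneg (sval_nonneg B j) s
  have hM (j : ℕ) : 0 ≤ sval M j ^ s := Real.rpow_nonneg (sval_nonneg M j) s
  have hsum : ∑ j ∈ Finset.range r, sval B j ^ s ≤ c ^ s * ∑ j ∈ Finset.range n, sval M j ^ s := by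
    rw [← sum_range_sval_rpow_eq B (le_max_left r n) hs.ne',
      ← sum_range_sval_rpow_eq M (le_max_right r n) hs.ne', Finset.mul_sum]
    refine Finset.sum_le_sum fun j _ => ?_
    rw [← Real.mul_rpow hc (sval_nonneg M j)]
    exact Real.rpow_le_rpow (sval_nonneg B j) (h j) hs.le
  calc (∑ j ∈ Finset.range r, sval B j ^ s) ^ (1 / s)
      ≤ (c ^ s * ∑ j ∈ Finset.range n, sval M j ^ s) ^ (1 / s) :=
        Real.rpow_le_rpow (Finset.sum_nonneg fun j _ => hB j) hsum (by positivity)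
    _ = c * (∑ j ∈ Finset.range n, sval M j ^ s) ^ (1 / s) := by
        rw [Real.mul_rpow (Real.rpow_nonneg hc s) (Finset.sum_nonneg fun j _ => hM j), one_div,
          Real.rpow_rpow_inv hc hs.ne']

theorem schatten_mul_mul_le {l m n r : ℕ} {p : ℝ≥0∞} (hp : 0 < p) (X : Matrix (Fin l) (Fin m) ℂ)
    (M : Matrix (Fin m) (Fin n) ℂ) (Z : Matrix (Fin n) (Fin r) ℂ) :
    schatten p (X * M * Z) ≤ ‖X‖ * ‖Z‖ * schatten p M :=
  schatten_le_mul_of_forall_sval_le hp (by positivity) (sval_mul_mul_le X M Z)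

theorem schatten_nonneg {m n : ℕ} (p : ℝ≥0∞) (M : Matrix (Fin m) (Fin n) ℂ) :
    0 ≤ schatten p M := by
  unfold schatten
  split_ifs
  · exact sval_nonneg M 0
  · exact Real.rpow_nonneg
      (Finset.sum_nonneg fun j _ => Real.rpow_nonneg (sval_nonneg M j) _) _

end SchattenNorm

section OperatorNorm

variable {𝕜 m n : Type*} [RCLike 𝕜] [Fintype m] [Fintype n] [DecidableEq n]

theorem norm_le_one_of_conjTranspose_mul_self_eq_one {W : Matrix m n 𝕜} (hW : Wᴴ * W = 1) :
    ‖W‖ ≤ 1 := by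
  have hsq : ‖W‖ * ‖W‖ ≤ 1 := by
    rw [← W.l2_opNorm_conjTranspose_mul_self, hW]
    exact (IsStarProjection.one (Matrix n n 𝕜)).norm_le
  nlinarith [norm_nonneg W]

variable [DecidableEq m]

theorem norm_one_sub_mul_conjTranspose_le_one {Q : Matrix m n 𝕜} (hQ : Qᴴ * Q = 1) :
    ‖1 - Q * Qᴴ‖ ≤ 1 := by
  have hproj : IsStarProjection (Q * Qᴴ) :=
    ⟨by rw [IsIdempotentElem, Matrix.mul_assoc, ← Matrix.mul_assoc Qᴴ, hQ, Matrix.one_mul],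
      isHermitian_mul_conjTranspose_self Q⟩
  exact hproj.one_sub.norm_le

theorem norm_mul_conjTranspose_self_pow_le (M : Matrix m n 𝕜) (q : ℕ) :
    ‖(M * Mᴴ) ^ q‖ ≤ ‖M‖ ^ (2 * q) := by
  rcases q.eq_zero_or_pos with rfl | hq
  · simpa using (IsStarProjection.one (Matrix m m 𝕜)).norm_le
  calc ‖(M * Mᴴ) ^ q‖ ≤ ‖M * Mᴴ‖ ^ q := norm_pow_le' _ hq
    _ ≤ (‖M‖ * ‖M‖) ^ q := by
        gcongr; simpa only [l2_opNorm_conjTranspose] using l2_opNorm_mul M Mᴴ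
    _ = ‖M‖ ^ (2 * q) := by rw [← sq, pow_mul]

theorem norm_diagonal_le {d : n → 𝕜} {c : ℝ} (hc : 0 ≤ c) (h : ∀ i, ‖d i‖ ≤ c) :
    ‖(diagonal d : Matrix n n 𝕜)‖ ≤ c := by
  rw [l2_opNorm_diagonal]
  exact (pi_norm_le_iff_of_nonneg hc).2 h

end OperatorNorm

section BlockDecomposition

theorem pow_mul_eq_mul_pow_of_mul_eq_mul {R m k : Type*} [Semiring R] [Fintype m] [DecidableEq m]
    [Fintype k] [DecidableEq k] {X : Matrix m m R} {U : Matrix m k R} {Y : Matrix k k R}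
    (h : X * U = U * Y) (q : ℕ) : X ^ q * U = U * Y ^ q := by
  induction q with
  | zero => simp
  | succ q ih => rw [pow_succ, Matrix.mul_assoc, h, ← Matrix.mul_assoc, ih, pow_succ,
      Matrix.mul_assoc]

variable {R m n k k' l l' : Type*} [Semiring R] [StarRing R]

/-- The columns of the partitioned matrix `[U₁ U₂]` are orthonormal. The singular vectors belonging
to the retained and to the discarded singular values form such a pair. -/
structure OrthonormalBlocks [Fintype m] [DecidableEq k] [DecidableEq l]
    (U₁ : Matrix m k R) (U₂ : Matrix m l R) : Prop where
  left : U₁ᴴ * U₁ = 1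
  right : U₂ᴴ * U₂ = 1
  left_right : U₁ᴴ * U₂ = 0

theorem OrthonormalBlocks.symm [Fintype m] [DecidableEq k] [DecidableEq l] {U₁ : Matrix m k R}
    {U₂ : Matrix m l R} (hU : OrthonormalBlocks U₁ U₂) : OrthonormalBlocks U₂ U₁ where
  left := hU.right
  right := hU.left
  left_right := by simpa using congrArg conjTranspose hU.left_right

variable [Fintype n] [Fintype k] [Fintype k'] [DecidableEq k'] [Fintype l] [Fintype l']
  [DecidableEq l'] {A : Matrix m n R} {U₁ : Matrix m k R} {U₂ : Matrix m l R} {V₁ : Matrix n k' R}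
  {V₂ : Matrix n l' R} {D : Matrix k k' R} {S : Matrix l l' R}

theorem mul_eq_mul_of_blocks (hA : A = U₁ * D * V₁ᴴ + U₂ * S * V₂ᴴ)
    (hV : OrthonormalBlocks V₁ V₂) : A * V₁ = U₁ * D := by
  rw [hA, Matrix.add_mul, Matrix.mul_assoc _ V₁ᴴ, Matrix.mul_assoc _ V₂ᴴ, hV.left,
    hV.symm.left_right, Matrix.mul_one, Matrix.mul_zero, add_zero]

variable [Fintype m] [DecidableEq k] [DecidableEq l]

theorem mul_conjTranspose_self_mul_eq_of_blocks (hA : A = U₁ * D * V₁ᴴ + U₂ * S * V₂ᴴ)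
    (hU : OrthonormalBlocks U₁ U₂) (hV : OrthonormalBlocks V₁ V₂) :
    A * Aᴴ * U₁ = U₁ * (D * Dᴴ) := by
  have hAH : Aᴴ = V₁ * Dᴴ * U₁ᴴ + V₂ * Sᴴ * U₂ᴴ := by simp [hA, Matrix.mul_assoc]
  rw [Matrix.mul_assoc, mul_eq_mul_of_blocks hAH hU, ← Matrix.mul_assoc,
    mul_eq_mul_of_blocks hA hV, Matrix.mul_assoc]

theorem pow_mul_conjTranspose_self_mul_eq_of_blocks [DecidableEq m]
    (hA : A = U₁ * D * V₁ᴴ + U₂ * S * V₂ᴴ) (hU : OrthonormalBlocks U₁ U₂)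
    (hV : OrthonormalBlocks V₁ V₂) (q : ℕ) :
    (A * Aᴴ) ^ q * A = U₁ * ((D * Dᴴ) ^ q * D) * V₁ᴴ + U₂ * ((S * Sᴴ) ^ q * S) * V₂ᴴ := by
  have h₁ : (A * Aᴴ) ^ q * U₁ = U₁ * (D * Dᴴ) ^ q :=
    pow_mul_eq_mul_pow_of_mul_eq_mul (mul_conjTranspose_self_mul_eq_of_blocks hA hU hV) q
  have h₂ : (A * Aᴴ) ^ q * U₂ = U₂ * (S * Sᴴ) ^ q :=
    pow_mul_eq_mul_pow_of_mul_eq_mul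
      (mul_conjTranspose_self_mul_eq_of_blocks (hA.trans (add_comm _ _)) hU.symm hV.symm) q
  calc (A * Aᴴ) ^ q * A
      = (A * Aᴴ) ^ q * (U₁ * D * V₁ᴴ + U₂ * S * V₂ᴴ) := congrArg _ hA
    _ = (A * Aᴴ) ^ q * U₁ * D * V₁ᴴ + (A * Aᴴ) ^ q * U₂ * S * V₂ᴴ := by
        simp only [Matrix.mul_add, Matrix.mul_assoc]
    _ = U₁ * ((D * Dᴴ) ^ q * D) * V₁ᴴ + U₂ * ((S * Sᴴ) ^ q * S) * V₂ᴴ := by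
        simp only [h₁, h₂, Matrix.mul_assoc]

theorem mul_conjTranspose_self_pow_mul_cancel {D C : Matrix k k R} (hDC : D * C = 1)
    (hCD : C * D = 1) (q : ℕ) : (D * Dᴴ) ^ q * D * (C * Cᴴ) ^ q = D := by
  have hinv : Dᴴ * D * (C * Cᴴ) = 1 := by
    rw [Matrix.mul_assoc, ← Matrix.mul_assoc D, hDC, Matrix.one_mul, ← conjTranspose_mul, hCD,
      conjTranspose_one]
  rw [mul_pow_mul, mul_assoc, pow_mul_pow_eq_one q hinv, mul_one]

end BlockDecomposition

section ProjectionError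

theorem mul_leading_block_eq_neg_mul {R m n k l l' r s : Type*} [Ring R] [StarRing R]
    [Fintype m] [DecidableEq m] [Fintype n] [Fintype k] [DecidableEq k] [Fintype l] [DecidableEq l]
    [Fintype l'] [DecidableEq l'] [Fintype s] {A : Matrix m n R}
    {U₁ : Matrix m k R} {U₂ : Matrix m l R} {V₁ : Matrix n k R} {V₂ : Matrix n l' R}
    {D C : Matrix k k R} {S : Matrix l l' R} {P : Matrix r m R} {Ω : Matrix n s R}
    {G : Matrix s k R} {q : ℕ} (hA : A = U₁ * D * V₁ᴴ + U₂ * S * V₂ᴴ)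
    (hU : OrthonormalBlocks U₁ U₂) (hV : OrthonormalBlocks V₁ V₂) (hDC : D * C = 1)
    (hCD : C * D = 1) (hG : V₁ᴴ * Ω * G = 1) (hP : P * ((A * Aᴴ) ^ q * A * Ω) = 0) :
    P * (U₁ * D * V₁ᴴ)
      = -(P * U₂ * (S * Sᴴ) ^ q) * (S * (V₂ᴴ * Ω * G)) * ((C * Cᴴ) ^ q * V₁ᴴ) := by
  have hsum : P * U₁ * ((D * Dᴴ) ^ q * D) * (V₁ᴴ * Ω * G)
      + P * U₂ * (S * Sᴴ) ^ q * (S * (V₂ᴴ * Ω * G)) = 0 := by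
    rw [pow_mul_conjTranspose_self_mul_eq_of_blocks hA hU hV] at hP
    simpa only [Matrix.mul_add, Matrix.add_mul, Matrix.mul_assoc, Matrix.zero_mul]
      using congrArg (· * G) hP
  rw [hG, Matrix.mul_one] at hsum
  calc P * (U₁ * D * V₁ᴴ)
      = P * U₁ * ((D * Dᴴ) ^ q * D * (C * Cᴴ) ^ q) * V₁ᴴ := by
        simp only [mul_conjTranspose_self_pow_mul_cancel hDC hCD, Matrix.mul_assoc]
    _ = P * U₁ * ((D * Dᴴ) ^ q * D) * ((C * Cᴴ) ^ q * V₁ᴴ) := by simp only [Matrix.mul_assoc]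
    _ = -(P * U₂ * (S * Sᴴ) ^ q) * (S * (V₂ᴴ * Ω * G)) * ((C * Cᴴ) ^ q * V₁ᴴ) := by
        rw [eq_neg_of_add_eq_zero_left hsum, Matrix.neg_mul _ (S * _)]

theorem schatten_mul_leading_block_le {m n k l l' r s q : ℕ} {p : ℝ≥0∞} (hp : 0 < p)
    {A : Matrix (Fin m) (Fin n) ℂ} {U₁ : Matrix (Fin m) (Fin k) ℂ} {U₂ : Matrix (Fin m) (Fin l) ℂ}
    {V₁ : Matrix (Fin n) (Fin k) ℂ} {V₂ : Matrix (Fin n) (Fin l') ℂ}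
    {D C : Matrix (Fin k) (Fin k) ℂ} {S : Matrix (Fin l) (Fin l') ℂ}
    {P : Matrix (Fin r) (Fin m) ℂ} {Ω : Matrix (Fin n) (Fin s) ℂ} {G : Matrix (Fin s) (Fin k) ℂ}
    (hA : A = U₁ * D * V₁ᴴ + U₂ * S * V₂ᴴ) (hU : OrthonormalBlocks U₁ U₂)
    (hV : OrthonormalBlocks V₁ V₂) (hDC : D * C = 1) (hG : V₁ᴴ * Ω * G = 1)
    (hP : P * ((A * Aᴴ) ^ q * A * Ω) = 0) (hPnorm : ‖P‖ ≤ 1) :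
    schatten p (P * (U₁ * D * V₁ᴴ))
      ≤ (‖S‖ * ‖C‖) ^ (2 * q) * schatten p (S * (V₂ᴴ * Ω * G)) := by
  have hleft : ‖-(P * U₂ * (S * Sᴴ) ^ q)‖ ≤ ‖S‖ ^ (2 * q) := by
    calc ‖-(P * U₂ * (S * Sᴴ) ^ q)‖ ≤ ‖P‖ * ‖U₂‖ * ‖(S * Sᴴ) ^ q‖ := by
          rw [norm_neg]
          exact (l2_opNorm_mul _ _).trans (by gcongr; exact l2_opNorm_mul _ _)
      _ ≤ 1 * 1 * ‖S‖ ^ (2 * q) := by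
          gcongr
          exacts [norm_le_one_of_conjTranspose_mul_self_eq_one hU.right,
            norm_mul_conjTranspose_self_pow_le S q]
      _ = ‖S‖ ^ (2 * q) := by ring
  have hright : ‖(C * Cᴴ) ^ q * V₁ᴴ‖ ≤ ‖C‖ ^ (2 * q) := by
    calc ‖(C * Cᴴ) ^ q * V₁ᴴ‖ ≤ ‖(C * Cᴴ) ^ q‖ * ‖V₁ᴴ‖ := l2_opNorm_mul _ _
      _ ≤ ‖C‖ ^ (2 * q) * 1 := by
          rw [l2_opNorm_conjTranspose]
          gcongr
          exacts [norm_mul_conjTranspose_self_pow_le C q,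
            norm_le_one_of_conjTranspose_mul_self_eq_one hV.left]
      _ = ‖C‖ ^ (2 * q) := mul_one _
  rw [mul_leading_block_eq_neg_mul hA hU hV hDC (mul_eq_one_comm.1 hDC) hG hP, mul_pow]
  have := schatten_nonneg p (S * (V₂ᴴ * Ω * G))
  exact (schatten_mul_mul_le hp _ _ _).trans (by gcongr)

end ProjectionError

section SingularValueDecomposition

open scoped ComplexOrder in
theorem mul_rpinv_of_rank_eq {a b : ℕ} {M : Matrix (Fin a) (Fin b) ℂ} (hM : M.rank = a) :
    M * rpinv M = 1 := by
  have hrange : LinearMap.range (M * Mᴴ).mulVecLin = ⊤ :=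
    Submodule.eq_top_of_finrank_eq <| by
      simpa only [rank, finrank_fin_fun] using (rank_self_mul_conjTranspose M).trans hM
  have hunit : IsUnit (M * Mᴴ) :=
    mulVec_surjective_iff_isUnit.1 (LinearMap.range_eq_top.1 hrange)
  rw [rpinv, ← Matrix.mul_assoc, mul_nonsing_inv _ ((isUnit_iff_isUnit_det _).1 hunit)]

theorem orthonormalBlocks_colsL_colsR {a b c : ℕ} {M : Matrix (Fin a) (Fin (b + c)) ℂ}
    (hM : Mᴴ * M = 1) : OrthonormalBlocks (colsL M) (colsR M) where
  left := by
    change (Mᴴ * M).submatrix (Fin.castAdd c) (Fin.castAdd c) = 1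
    rw [hM, submatrix_one _ (Fin.castAdd_injective b c)]
  right := by
    change (Mᴴ * M).submatrix (Fin.natAdd b) (Fin.natAdd b) = 1
    rw [hM, submatrix_one _ (Fin.natAdd_injective c b)]
  left_right := by
    change (Mᴴ * M).submatrix (Fin.castAdd c) (Fin.natAdd b) = 0
    ext i j
    have hij : Fin.castAdd c i ≠ Fin.natAdd b j := by
      rw [Ne, Fin.ext_iff, Fin.val_castAdd, Fin.val_natAdd]
      omega
    rw [hM, submatrix_apply, one_apply_ne hij, Matrix.zero_apply]

theorem mul_diagRect_mul_conjTranspose_eq_add {k m₂ n₂ a b : ℕ}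
    (U : Matrix (Fin a) (Fin (k + m₂)) ℂ) (V : Matrix (Fin b) (Fin (k + n₂)) ℂ) (σ : ℕ → ℝ) :
    U * diagRect σ 0 (k + m₂) (k + n₂) * Vᴴ
      = colsL U * diagRect σ 0 k k * (colsL V)ᴴ
        + colsR U * diagRect σ k m₂ n₂ * (colsR V)ᴴ := by
  have hne (x : ℕ) (i : Fin k) : ¬ k + x = (i : ℕ) := by omega
  have hne' (x : ℕ) (i : Fin k) : ¬ (i : ℕ) = k + x := by omega
  ext i j
  simp [mul_apply, Fin.sum_univ_add, diagRect, colsL, colsR, hne, hne']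

theorem diagRect_mul_conjTranspose_self (σ : ℕ → ℝ) (off a b : ℕ) :
    diagRect σ off a b * (diagRect σ off a b)ᴴ
      = diagonal fun i : Fin a => if (i : ℕ) < b then ((σ (off + i) ^ 2 : ℝ) : ℂ) else 0 := by
  ext i j
  rw [mul_apply, diagonal_apply]
  rcases lt_or_ge (i : ℕ) b with hi | hi
  · rw [Fintype.sum_eq_single ⟨i, hi⟩]
    · by_cases hij : i = j
      · subst hij
        simp [diagRect, hi, sq]
      · have hji : ¬ (j : ℕ) = i := fun h => hij (Fin.ext h.symm)
        simp [diagRect, hij, hji]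
    · intro x hx
      have hix : ¬ (i : ℕ) = x := fun h => hx (Fin.ext h.symm)
      simp [diagRect, hix]
  · refine (Finset.sum_eq_zero fun x _ => ?_).trans (by simp [hi.not_gt])
    have hix : ¬ (i : ℕ) = x := by omega
    simp [diagRect, hix]

theorem norm_diagRect_le {σ : ℕ → ℝ} {off a b : ℕ} {c : ℝ} (hc : 0 ≤ c)
    (hσ : ∀ i, |σ (off + i)| ≤ c) : ‖diagRect σ off a b‖ ≤ c := by
  have hsq : ‖diagRect σ off a b‖ * ‖diagRect σ off a b‖ ≤ c * c := by
    rw [← l2_opNorm_conjTranspose, ← l2_opNorm_conjTranspose_mul_self, conjTranspose_conjTranspose,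
      diagRect_mul_conjTranspose_self]
    refine norm_diagonal_le (by positivity) fun i => ?_
    split_ifs
    · rw [Complex.norm_real, norm_pow, Real.norm_eq_abs, ← sq]
      gcongr
      exact hσ i
    · simpa using mul_nonneg hc hc
  exact (mul_self_le_mul_self_iff (norm_nonneg _) hc).2 hsq

theorem diagRect_mul_diagonal_inv {σ : ℕ → ℝ} {k : ℕ} (hσ : ∀ i : Fin k, σ i ≠ 0) :
    diagRect σ 0 k k * diagonal (fun i : Fin k => (σ i : ℂ)⁻¹) = 1 := by
  ext i j
  by_cases hij : i = j
  · subst hij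
    simp [diagRect, hσ]
  · simp [diagRect, hij, Fin.val_inj]

end SingularValueDecomposition

theorem lowrank_error_rank_k_schatten_general {k m₂ n₂ m n r s : ℕ} (q : ℕ)
    {A : Matrix (Fin m) (Fin n) ℂ} {U : Matrix (Fin m) (Fin (k + m₂)) ℂ}
    {V : Matrix (Fin n) (Fin (k + n₂)) ℂ} {σ : ℕ → ℝ} (hU : Uᴴ * U = 1) (hV : Vᴴ * V = 1)
    (hσ_nonneg : ∀ i, 0 ≤ σ i) (hσ_anti : Antitone σ)
    (hA : A = U * diagRect σ 0 (k + m₂) (k + n₂) * Vᴴ) (hrank : 0 < σ (k - 1))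
    {Ω : Matrix (Fin n) (Fin s) ℂ} {G : Matrix (Fin s) (Fin k) ℂ}
    (hG : (colsL V)ᴴ * Ω * G = 1) {Q : Matrix (Fin m) (Fin r) ℂ} {R : Matrix (Fin r) (Fin s) ℂ}
    (hQ : Qᴴ * Q = 1) (hQR : (A * Aᴴ) ^ q * A * Ω = Q * R) {p : ℝ≥0∞} (hp : 0 < p) :
    schatten p ((1 - Q * Qᴴ) * (colsL U * diagRect σ 0 k k * (colsL V)ᴴ)) ≤
      (σ k / σ (k - 1)) ^ (2 * q) *
        schatten p (diagRect σ k m₂ n₂ * ((colsR V)ᴴ * Ω * G)) := by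
  have hle (i : Fin k) : σ (k - 1) ≤ σ i := hσ_anti (by omega)
  have hpos (i : Fin k) : 0 < σ i := hrank.trans_le (hle i)
  set C : Matrix (Fin k) (Fin k) ℂ := diagonal fun i => (σ i : ℂ)⁻¹
  have hDC : diagRect σ 0 k k * C = 1 := diagRect_mul_diagonal_inv fun i => (hpos i).ne'
  have hC : ‖C‖ ≤ (σ (k - 1))⁻¹ := norm_diagonal_le (by positivity) fun i => by
    rw [norm_inv, Complex.norm_of_nonneg (hσ_nonneg i)]
    exact inv_anti₀ hrank (hle i)
  have hS : ‖diagRect σ k m₂ n₂‖ ≤ σ k := norm_diagRect_le (hσ_nonneg k) fun i => by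
    rw [abs_of_nonneg (hσ_nonneg _)]
    exact hσ_anti (Nat.le_add_right k i)
  have hP : (1 - Q * Qᴴ) * ((A * Aᴴ) ^ q * A * Ω) = 0 := by
    rw [hQR, ← Matrix.mul_assoc, Matrix.sub_mul, Matrix.mul_assoc Q, hQ, Matrix.one_mul,
      Matrix.mul_one, sub_self, Matrix.zero_mul]
  have hblock := schatten_mul_leading_block_le hp
    (hA.trans (mul_diagRect_mul_conjTranspose_eq_add U V σ)) (orthonormalBlocks_colsL_colsR hU)
    (orthonormalBlocks_colsL_colsR hV) hDC hG hP (norm_one_sub_mul_conjTranspose_le_one hQ)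
  refine hblock.trans ?_
  have := schatten_nonneg p (diagRect σ k m₂ n₂ * ((colsR V)ᴴ * Ω * G))
  rw [div_eq_mul_inv]
  gcongr
  exact hσ_nonneg k

/-- Theorem 4.1, bound (4.2): projection error of the best rank-k part. -/
theorem lowrank_error_rank_k_schatten
    {k m₂ n₂ ρ : ℕ} (q : ℕ) (hk : 1 ≤ k)
    (A : Matrix (Fin (k + m₂)) (Fin (k + n₂)) ℂ)
    (U : Matrix (Fin (k + m₂)) (Fin (k + m₂)) ℂ)
    (V : Matrix (Fin (k + n₂)) (Fin (k + n₂)) ℂ)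
    (σ : ℕ → ℝ)
    (hU : Uᴴ * U = 1) (hU' : U * Uᴴ = 1)
    (hV : Vᴴ * V = 1) (hV' : V * Vᴴ = 1)
    (hσ0 : ∀ i, 0 ≤ σ i) (hσm : ∀ i j, i ≤ j → σ j ≤ σ i)
    (hA : A = U * diagRect σ 0 (k + m₂) (k + n₂) * Vᴴ)
    (hrank : 0 < σ (k - 1)) (hgap : σ k < σ (k - 1))
    (Ω : Matrix (Fin (k + n₂)) (Fin (k + ρ)) ℂ)
    (hΩ : ((colsL V)ᴴ * Ω).rank = k)
    (Q : Matrix (Fin (k + m₂)) (Fin (k + ρ)) ℂ)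
    (R : Matrix (Fin (k + ρ)) (Fin (k + ρ)) ℂ)
    (hQ : Qᴴ * Q = 1) (hR : R.BlockTriangular id)
    (hQR : (A * Aᴴ) ^ q * A * Ω = Q * R)
    :
    ∀ p : ℝ≥0∞, 1 ≤ p →
      schatten p ((1 - Q * Qᴴ) * (colsL U * diagRect σ 0 k k * (colsL V)ᴴ)) ≤
        (σ k / σ (k - 1)) ^ (2 * q) * schatten p (diagRect σ k m₂ n₂ * ((colsR V)ᴴ * Ω * rpinv ((colsL V)ᴴ * Ω))) := by
  intro p hp
  exact lowrank_error_rank_k_schatten_general q hU hV hσ0 (fun _ _ => hσm _ _) hA hrank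
    (mul_rpinv_of_rank_eq hΩ) hQ hQR (zero_lt_one.trans_le hp)
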